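/- arXiv:1903.09869 — 6 statements merged into one kernel-verified Lean document; each statement's English description precedes it below -/
import Mathlib

section
/- Let (s_t)_{t∈ℕ} be a sequence of non-negative real numbers such that the Cesàro averages S_T := (1/T) ∑_{t=1}^T s_t converge to 0 as T → ∞. Then s_t converges to 0 with increasing permanence. -/
/-- Convergence with increasing permanence (i.p.) of a real sequence to `s'`. -/
def ConvIP (s : ℕ → ℝ) (s' : ℝ) : Prop :=
  ∀ ε > 0, ∀ D N : ℕ, ∃ n, N ≤ n ∧ ∀ i, 1 ≤ i → i ≤ D → |s' - s (n + i)| ≤ ε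

/-- If the Cesàro averages of a non-negative real sequence converge to 0,
then the sequence converges to 0 with increasing permanence. -/
theorem cesaro_to_zero_implies_convIP (s : ℕ → ℝ) (hs : ∀ t, 0 ≤ s t)
    (h : Filter.Tendsto (fun T : ℕ => (1 / (T : ℝ)) * ∑ t ∈ Finset.Icc 1 T, s t)
      Filter.atTop (nhds 0)) :
    ConvIP s 0 := by
  intro ε hε D N
  by_contra! hc
  have key : ∀ k : ℕ, (k : ℝ) * ε ≤ ∑ t ∈ Finset.Icc 1 (N + k * D), s t := by
    intro k
    induction k with
    | zero => simpa using Finset.sum_nonneg (fun t _ => hs t)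
    | succ k ih =>
      obtain ⟨i, hi1, hi2, hi⟩ := hc (N + k * D) (by omega)
      rw [zero_sub, abs_neg, abs_of_nonneg (hs _)] at hi
      have hsub : insert (N + k * D + i) (Finset.Icc 1 (N + k * D))
          ⊆ Finset.Icc 1 (N + (k + 1) * D) := by
        intro x hx
        rw [Finset.mem_insert, Finset.mem_Icc] at hx
        rw [Finset.mem_Icc, add_mul, one_mul]
        omega
      have h1 := Finset.sum_le_sum_of_subset_of_nonneg hsub (fun t _ _ => hs t)
      rw [Finset.sum_insert (by rw [Finset.mem_Icc]; omega)] at h1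
      push_cast
      linarith
  have hpos : 0 < ε / (1 + (D : ℝ)) := by positivity
  obtain ⟨M, hM⟩ := Filter.eventually_atTop.1 (h.eventually (gt_mem_nhds hpos))
  obtain ⟨j, hj1, hj2, -⟩ := hc N le_rfl
  have hD : 1 ≤ D := hj1.trans hj2
  set k := N + M + 1 with hk
  have h2 := hM (N + k * D) (by nlinarith)
  have h3 := key k
  have hTpos : (0 : ℝ) < ((N + k * D : ℕ) : ℝ) := by
    have : 0 < N + k * D := by positivity
    exact_mod_cast this
  rw [one_div, inv_mul_eq_div, div_lt_div_iff₀ hTpos (by positivity)] at h2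
  have hT : ((N + k * D : ℕ) : ℝ) ≤ k * (1 + D) := by
    have : N + k * D ≤ k * (1 + D) := by nlinarith
    exact_mod_cast this
  have h4 := mul_le_mul_of_nonneg_right h3 (by positivity : (0 : ℝ) ≤ 1 + (D : ℝ))
  have h5 := mul_le_mul_of_nonneg_left hT hε.le
  nlinarith
end

section
/- Define the real sequence (q_t)_{t∈ℕ} by q_t = 1 if t is a power of 2 (t = 2^n for some n ∈ ℕ) and q_t = 1/t² otherwise. Then q_t converges to 0 with increasing permanence. -/
/-- The sequence `q` with `q t = 1` if `t` is a power of 2 and `q t = 1/t²` otherwise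
converges to 0 with increasing permanence. -/
theorem power_of_two_sequence_convIP (q : ℕ → ℝ)
    (h1 : ∀ t : ℕ, (∃ n : ℕ, t = 2 ^ n) → q t = 1)
    (h2 : ∀ t : ℕ, (¬ ∃ n : ℕ, t = 2 ^ n) → q t = 1 / (t : ℝ) ^ 2) :
    ConvIP q 0 := by
  intro ε hε D N
  obtain ⟨M, hM⟩ := exists_nat_gt (1 / ε)
  obtain ⟨K, hK⟩ : ∃ K, K = D + N + M + 1 := ⟨_, rfl⟩
  have hlt : K < 2 ^ K := Nat.lt_two_pow_self
  refine ⟨2 ^ K, by omega, fun i hi hiD => ?_⟩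
  have hnp : ¬ ∃ n : ℕ, 2 ^ K + i = 2 ^ n := by
    rintro ⟨n, hn⟩
    have a : K < n := (Nat.pow_lt_pow_iff_right (a := 2) (by norm_num)).1 (by omega)
    have b : n < K + 1 := (Nat.pow_lt_pow_iff_right (a := 2) (by norm_num)).1 (by
      rw [pow_succ]; omega)
    omega
  rw [h2 _ hnp]
  obtain ⟨t, ht⟩ : ∃ t, t = 2 ^ K + i := ⟨_, rfl⟩
  rw [← ht]
  have htM : (M : ℝ) ≤ t := by exact_mod_cast (by omega : M ≤ t)
  have ht1 : (1 : ℝ) ≤ t := by exact_mod_cast (by omega : 1 ≤ t)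
  have h3 : 1 < M * ε := (div_lt_iff₀ hε).1 hM
  rw [zero_sub, abs_neg, abs_of_nonneg (by positivity), div_le_iff₀ (by positivity)]
  have h4 : (M : ℝ) * ε ≤ t * ε := by gcongr
  have h5 : (t : ℝ) * ε ≤ t ^ 2 * ε := by gcongr; nlinarith
  linarith
end

section
/- Let (X, ‖·‖) be a normed vector space and φ : X → X a contraction with fixed point x* ∈ X and Lipschitz constant λ < 1 (relative to the metric induced by the norm). Let (y_t)_{t∈ℕ}, (d_t)_{t∈ℕ} be sequences in X satisfying y_{t+1} = φ(y_t) + d_t for all t, and assume the disturbances are bounded: there exists b such that ‖d_t‖ ≤ b for all t. Let r ≥ 0. If ‖d_t‖ converges with increasing permanence to the interval [0, r], then ‖y_t − x*‖ converges with increasing permanence to the interval [0, r/(1 − λ)]. -/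
/-- A nonnegative real sequence converges with increasing permanence to the interval `[0, r]`:
for every `ε > 0` and all `D, N` there is `n ≥ N` with `s (n + i) ≤ r + ε` for `i = 1, …, D`. -/
def ConvIPToInterval (s : ℕ → ℝ) (r : ℝ) : Prop :=
  ∀ ε > 0, ∀ D N : ℕ, ∃ n, N ≤ n ∧ ∀ i, 1 ≤ i → i ≤ D → s (n + i) ≤ r + ε

/-- Disturbed contraction dynamics: if the norms of the disturbances converge with
increasing permanence to `[0, r]`, then the distances of the iterates to the fixed point
converge with increasing permanence to `[0, r / (1 - λ)]`. -/
theorem contraction_disturbed_convIP {X : Type*} [NormedAddCommGroup X] [NormedSpace ℝ X]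
    (φ : X → X) (lam : ℝ) (hlam0 : 0 ≤ lam) (hlam1 : lam < 1)
    (hlip : ∀ a b : X, ‖φ a - φ b‖ ≤ lam * ‖a - b‖)
    (xstar : X) (hfix : φ xstar = xstar)
    (y d : ℕ → X) (hrec : ∀ t : ℕ, y (t + 1) = φ (y t) + d t)
    (b : ℝ) (hb : ∀ t, ‖d t‖ ≤ b)
    (r : ℝ) (hr : 0 ≤ r)
    (hd : ConvIPToInterval (fun t => ‖d t‖) r) :
    ConvIPToInterval (fun t => ‖y t - xstar‖) (r / (1 - lam)) := by
  have h1 : 0 < 1 - lam := by linarith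
  have hstep : ∀ t, ‖y (t + 1) - xstar‖ ≤ lam * ‖y t - xstar‖ + ‖d t‖ := by
    intro t
    have e : y (t + 1) - xstar = (φ (y t) - φ xstar) + d t := by
      rw [hrec, hfix]; abel
    rw [e]
    have := norm_add_le (φ (y t) - φ xstar) (d t)
    have := hlip (y t) xstar
    linarith
  obtain ⟨M, hM0, hMb⟩ : ∃ M, ‖y 0 - xstar‖ ≤ M ∧ b / (1 - lam) ≤ M :=
    ⟨_, le_max_left _ _, le_max_right _ _⟩
  have hMb' : b ≤ M * (1 - lam) := (div_le_iff₀ h1).mp hMb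
  have hMn : 0 ≤ M := (norm_nonneg _).trans hM0
  have hM : ∀ t, ‖y t - xstar‖ ≤ M := by
    intro t
    induction t with
    | zero => exact hM0
    | succ t ih =>
      have := hstep t
      have := hb t
      have := mul_le_mul_of_nonneg_left ih hlam0
      linarith
  intro ε hε D N
  obtain ⟨K, hK⟩ : ∃ K : ℕ, lam ^ K * M ≤ ε / 2 := by
    have ht : Filter.Tendsto (fun k : ℕ => lam ^ k * M) Filter.atTop (nhds (0 * M)) :=
      (tendsto_pow_atTop_nhds_zero_of_lt_one hlam0 hlam1).mul_const M
    rw [zero_mul] at ht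
    obtain ⟨K, hK⟩ := (ht.eventually (gt_mem_nhds (half_pos hε))).exists
    exact ⟨K, hK.le⟩
  obtain ⟨n, hn, hdn⟩ := hd (ε / 2 * (1 - lam)) (by positivity) (D + K) N
  have hR0 : 0 ≤ r / (1 - lam) := by positivity
  have hR1 : r / (1 - lam) * (1 - lam) = r := div_mul_cancel₀ r h1.ne'
  generalize r / (1 - lam) = R at hR0 hR1 ⊢
  have key : ∀ k, k ≤ D + K → ‖y (n + 1 + k) - xstar‖ ≤ lam ^ k * M + (R + ε / 2) := by
    intro k
    induction k with
    | zero =>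
      intro _
      have := hM (n + 1)
      simp only [add_zero, pow_zero, one_mul]
      linarith
    | succ k ih =>
      intro hk
      have a1 := mul_le_mul_of_nonneg_left (ih (by omega)) hlam0
      have a2 := hstep (n + 1 + k)
      have a3 := hdn (1 + k) (by omega) (by omega)
      simp only [← add_assoc] at a3
      rw [← add_assoc, pow_succ]
      linarith
  refine ⟨n + K, by omega, ?_⟩
  intro i hi1 hiD
  obtain ⟨j, rfl⟩ : ∃ j, i = j + 1 := ⟨i - 1, by omega⟩
  have a := key (K + j) (by omega)
  have e : n + K + (j + 1) = n + 1 + (K + j) := by omega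
  have p : lam ^ (K + j) * M ≤ lam ^ K * M :=
    mul_le_mul_of_nonneg_right (pow_le_pow_of_le_one hlam0 hlam1.le (by omega)) hMn
  simp only [e]
  linarith
end

section
/- Let M be a continuous linear operator on a normed vector space X (e.g. a square real matrix acting on Euclidean space with the operator/spectral norm), and suppose σ := ∑_{i=0}^∞ ‖M^i‖ < ∞ (the series of operator norms of the powers of M converges). Consider the recurrence x_{t+1} = M x_t + d_t for t ∈ ℕ. If the disturbance sequence (d_t) is bounded (∃ b ∀ t: ‖d_t‖ ≤ b) and ‖d_t‖ converges with increasing permanence to the interval [0, r] for some r > 0, then ‖x_t‖ converges with increasing permanence to the interval [0, σ r]. -/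
theorem aux_bound {X : Type*} [NormedAddCommGroup X] [NormedSpace ℝ X]
    (M : X →L[ℝ] X) (x d : ℕ → X) (hrec : ∀ t : ℕ, x (t + 1) = M (x t) + d t) (C : ℝ) (k : ℕ) :
    ∀ m, (∀ j < k, ‖d (m + j)‖ ≤ C) →
      ‖x (m + k) - (M ^ k) (x m)‖ ≤ (∑ j ∈ Finset.range k, ‖M ^ j‖) * C := by
  induction k with
  | zero => intro m _; simp
  | succ k ih =>
    intro m h
    have h1 := ih (m + 1) (fun j hj => by
      have := h (j + 1) (by omega)
      rwa [show m + (j + 1) = m + 1 + j by ring] at this)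
    have h0 : ‖d m‖ ≤ C := h 0 (by omega)
    have e : x (m + (k + 1)) - (M ^ (k + 1)) (x m)
        = (x (m + 1 + k) - (M ^ k) (x (m + 1))) + (M ^ k) (d m) := by
      rw [show m + (k + 1) = m + 1 + k by ring, hrec m, map_add, pow_succ]
      simp only [ContinuousLinearMap.mul_apply]
      abel
    rw [e, Finset.sum_range_succ, add_mul]
    refine (norm_add_le _ _).trans (add_le_add h1 ?_)
    exact ((M ^ k).le_opNorm _).trans (mul_le_mul_of_nonneg_left h0 (norm_nonneg _))

/-- Linear recurrence `x_{t+1} = M x_t + d_t` with `σ = ∑ ‖Mⁱ‖ < ∞`: if the bounded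
disturbances vanish with increasing permanence up to error `r`, then `‖x_t‖` converges
with increasing permanence to `[0, σ r]`. -/
theorem stable_linear_disturbed_convIP {X : Type*} [NormedAddCommGroup X] [NormedSpace ℝ X]
    (M : X →L[ℝ] X)
    (hsum : Summable fun i : ℕ => ‖M ^ i‖)
    (σ : ℝ) (hσ : σ = ∑' i : ℕ, ‖M ^ i‖)
    (x d : ℕ → X) (hrec : ∀ t : ℕ, x (t + 1) = M (x t) + d t)
    (b : ℝ) (hb : ∀ t, ‖d t‖ ≤ b)
    (r : ℝ) (hr : 0 < r)
    (hd : ConvIPToInterval (fun t => ‖d t‖) r) :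
    ConvIPToInterval (fun t => ‖x t‖) (σ * r) := by
  have hσ0 : 0 ≤ σ := hσ ▸ tsum_nonneg fun _ => norm_nonneg _
  have hpart : ∀ k, ∑ j ∈ Finset.range k, ‖M ^ j‖ ≤ σ := fun k => by
    rw [hσ]; exact hsum.sum_le_tsum _ fun _ _ => norm_nonneg _
  have hb0 : 0 ≤ b := (norm_nonneg _).trans (hb 0)
  have key : ∀ C, 0 ≤ C → ∀ m k, (∀ j < k, ‖d (m + j)‖ ≤ C) →
      ‖x (m + k)‖ ≤ ‖M ^ k‖ * ‖x m‖ + σ * C := by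
    intro C hC m k h
    have h1 := aux_bound M x d hrec C k m h
    have h2 := mul_le_mul_of_nonneg_right (hpart k) hC
    have h3 := (M ^ k).le_opNorm (x m)
    have h4 := norm_sub_norm_le (x (m + k)) ((M ^ k) (x m))
    linarith
  obtain ⟨B, hB0, hB⟩ : ∃ B, 0 ≤ B ∧ ∀ t, ‖x t‖ ≤ B := by
    refine ⟨σ * ‖x 0‖ + σ * b, by positivity, fun t => ?_⟩
    have h1 := key b hb0 0 t fun j _ => hb _
    rw [zero_add] at h1
    have h2 : ‖M ^ t‖ ≤ σ := by
      rw [hσ]; exact hsum.le_tsum t fun _ _ => norm_nonneg _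
    have h3 := mul_le_mul_of_nonneg_right h2 (norm_nonneg (x 0))
    linarith
  intro ε hε D N
  have hlim : Filter.Tendsto (fun k => ‖M ^ k‖ * B) Filter.atTop (nhds 0) := by
    simpa using hsum.tendsto_atTop_zero.mul_const B
  obtain ⟨K, hK⟩ := Filter.eventually_atTop.1 (hlim.eventually_le_const (half_pos hε))
  obtain ⟨n, hn, h⟩ := hd (ε / (2 * (σ + 1))) (by positivity) (K + D) N
  refine ⟨n + K, by omega, fun i hi hiD => ?_⟩
  have h1 := key (r + ε / (2 * (σ + 1))) (by positivity) (n + 1) (K + i - 1) (fun j hj => by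
    have := h (1 + j) (by omega) (by omega)
    rwa [← add_assoc] at this)
  rw [show n + 1 + (K + i - 1) = n + K + i by omega] at h1
  have h2 := hK (K + i - 1) (by omega)
  have h3 := mul_le_mul_of_nonneg_left (hB (n + 1)) (norm_nonneg (M ^ (K + i - 1)))
  have h4 : σ * (ε / (2 * (σ + 1))) ≤ ε / 2 := by
    rw [mul_div_assoc', div_le_div_iff₀ (by positivity) (by positivity)]
    nlinarith
  show ‖x (n + K + i)‖ ≤ σ * r + ε
  rw [mul_add] at h1
  linarith
end

section
/- Let Θ be a set (the parameter space) and (ℓ_t)_{t∈ℕ} a sequence of non-negative stage loss functions ℓ_t : Θ → ℝ_{≥0} such that there exists θ* ∈ Θ with ℓ_t(θ*) = 0 for all t (the prediction model class is sufficiently expressive: min_θ ℓ_t(θ) = 0 for all t). Suppose the parameters (θ_t)_{t∈ℕ} are chosen by a no-external-regret algorithm, i.e. there exists a function Δ : ℕ → ℝ with Δ(T)/T → 0 as T → ∞ such that for all T: ∑_{t=1}^T ℓ_t(θ_t) − inf_{θ∈Θ} ∑_{t=1}^T ℓ_t(θ) ≤ Δ(T). Then the online prediction losses vanish with increasing permanence: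 ℓ_t(θ_t) ⇝ 0 as t → ∞. -/
/-- No-regret online learning with a sufficiently expressive model class: the online
prediction losses vanish with increasing permanence. -/
theorem no_regret_losses_convIP {Θ : Type*} (ℓ : ℕ → Θ → ℝ)
    (hnn : ∀ t θ', 0 ≤ ℓ t θ')
    (θstar : Θ) (hstar : ∀ t, ℓ t θstar = 0)
    (θ : ℕ → Θ) (Δ : ℕ → ℝ)
    (hΔ : Filter.Tendsto (fun T : ℕ => Δ T / T) Filter.atTop (nhds 0))
    (hregret : ∀ T : ℕ,
      ∑ t ∈ Finset.Icc 1 T, ℓ t (θ t) - ⨅ θ' : Θ, ∑ t ∈ Finset.Icc 1 T, ℓ t θ' ≤ Δ T) :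
    ConvIP (fun t => ℓ t (θ t)) 0 := by
  have hS : ∀ T : ℕ, ∑ t ∈ Finset.Icc 1 T, ℓ t (θ t) ≤ Δ T := by
    intro T
    have h1 : ⨅ θ' : Θ, ∑ t ∈ Finset.Icc 1 T, ℓ t θ' ≤ ∑ t ∈ Finset.Icc 1 T, ℓ t θstar := by
      refine ciInf_le ⟨0, ?_⟩ θstar
      rintro _ ⟨θ', rfl⟩
      exact Finset.sum_nonneg fun t _ => hnn t θ'
    have h2 : ∑ t ∈ Finset.Icc 1 T, ℓ t θstar = 0 := Finset.sum_eq_zero fun t _ => hstar t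
    have h3 := hregret T
    linarith
  intro ε hε D N
  by_contra hcon
  push Not at hcon
  have hbig : ∀ n, N ≤ n → ∃ i, 1 ≤ i ∧ i ≤ D ∧ ε < ℓ (n + i) (θ (n + i)) := by
    intro n hn
    obtain ⟨i, h1, h2, h3⟩ := hcon n hn
    refine ⟨i, h1, h2, ?_⟩
    rwa [zero_sub, abs_neg, abs_of_nonneg (hnn _ _)] at h3
  have hD : 1 ≤ D := by
    obtain ⟨i, h1, h2, _⟩ := hbig N le_rfl
    omega
  have hlow : ∀ k : ℕ, (k : ℝ) * ε ≤ ∑ t ∈ Finset.Icc 1 (N + k * D), ℓ t (θ t) := by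
    intro k
    induction k with
    | zero =>
      simpa using Finset.sum_nonneg fun t (_ : t ∈ Finset.Icc 1 N) => hnn t (θ t)
    | succ k ih =>
      obtain ⟨i, h1, h2, h3⟩ := hbig (N + k * D) (Nat.le_add_right _ _)
      have hnot : N + k * D + i ∉ Finset.Icc 1 (N + k * D) := by
        simp only [Finset.mem_Icc, not_and, not_le]
        omega
      have hsub : insert (N + k * D + i) (Finset.Icc 1 (N + k * D)) ⊆
          Finset.Icc 1 (N + (k + 1) * D) := by
        intro t ht
        have hk : (k + 1) * D = k * D + D := by ring
        simp only [Finset.mem_insert, Finset.mem_Icc] at ht ⊢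
        omega
      have h4 := Finset.sum_le_sum_of_subset_of_nonneg (f := fun t => ℓ t (θ t)) hsub
        (fun t _ _ => hnn t (θ t))
      rw [Finset.sum_insert hnot] at h4
      push_cast
      linarith
  have hδ : 0 < ε / ((D : ℝ) + 1) := by positivity
  obtain ⟨T0, hT0⟩ := Filter.eventually_atTop.1 (hΔ.eventually (gt_mem_nhds hδ))
  obtain ⟨k, hkN, hkT, hk1⟩ : ∃ k : ℕ, N ≤ k ∧ T0 ≤ k ∧ 1 ≤ k :=
    ⟨N + T0 + 1, by omega, by omega, by omega⟩
  have hkD : k ≤ k * D := Nat.le_mul_of_pos_right k hD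
  have h5 := hT0 (N + k * D) (by omega)
  have hpos : (0 : ℝ) < ((N + k * D : ℕ) : ℝ) := by
    exact_mod_cast (by omega : 0 < N + k * D)
  rw [div_lt_iff₀ hpos] at h5
  have h6 : ((N + k * D : ℕ) : ℝ) ≤ k * ((D : ℝ) + 1) := by
    have : (N : ℝ) ≤ k := by exact_mod_cast hkN
    push_cast
    linarith
  have h7 := mul_le_mul_of_nonneg_left h6 hδ.le
  have h8 : ε / ((D : ℝ) + 1) * (k * ((D : ℝ) + 1)) = k * ε := by
    field_simp
  have h9 := hlow k
  have h10 := hS (N + k * D)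
  linarith
end

section
/- Consider an online mean-square regression setting: (Ω, P) a probability space, (x_t)_{t∈ℕ} an i.i.d. sequence of 𝒳-valued random inputs with common distribution p, ℓ : 𝒳 × Θ → ℝ_{≥0} a non-negative measurable loss bounded by a constant B, and (θ_t)_{t∈ℕ} a sequence of Θ-valued random parameters where each θ_t is measurable with respect to the information available before time t (in particular θ_t is independent of x_t). Define r_f := inf_{θ∈Θ} E_{x∼p}[ℓ(x, θ)]. Assume: (a) there is Δ : ℕ → ℝ with Δ(T)/T → 0 such that almost surely, for all T, ∑_{t=1}^T ℓ(x_t, θ_t) ≤ inf_{θ∈Θ} ∑_{t=1}^T ℓ(x_t, θ) + Δ(T) (sublinear external regret); and (b) almost surely, inf_{θ∈Θ} (1/T) ∑_{t=1}^T ℓ(x_t, θ) → r_f as T → ∞. Then the sequence of expected prediction losses converges to r_f with increasing permanence: E[ℓ(x_t, θ_t)] ⇝ r_f as t → ∞. -/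
open MeasureTheory ProbabilityTheory Filter

theorem convIP_of_sum_le (e : ℕ → ℝ) (r : ℝ) (Δ : ℕ → ℝ) (hge : ∀ t, r ≤ e t)
    (hsum : ∀ T : ℕ, ∑ t ∈ Finset.Icc 1 T, (e t - r) ≤ Δ T)
    (hΔ : Tendsto (fun T : ℕ => Δ T / T) atTop (nhds 0)) : ConvIP e r := by
  intro ε hε D N
  by_contra! hcon
  have hD : 0 < D := by
    obtain ⟨i, h1, h2, -⟩ := hcon N le_rfl
    omega
  have hDr : (1 : ℝ) ≤ D := by exact_mod_cast hD
  have hblock : ∀ k : ℕ, (k : ℝ) * ε ≤ ∑ t ∈ Finset.Icc 1 (N + k * D), (e t - r) := by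
    intro k
    induction k with
    | zero =>
      simp only [Nat.cast_zero, zero_mul]
      exact Finset.sum_nonneg fun t _ => sub_nonneg.2 (hge t)
    | succ k ih =>
      obtain ⟨i, h1, h2, h3⟩ := hcon (N + k * D) (by omega)
      have h4 : ε < e (N + k * D + i) - r := by
        rwa [abs_sub_comm, abs_of_nonneg (sub_nonneg.2 (hge _))] at h3
      have hsub : insert (N + k * D + i) (Finset.Icc 1 (N + k * D)) ⊆
          Finset.Icc 1 (N + (k + 1) * D) := by
        intro t ht
        have hk : (k + 1) * D = k * D + D := by ring
        simp only [Finset.mem_insert, Finset.mem_Icc] at ht ⊢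
        rw [hk]
        omega
      have h5 := Finset.sum_le_sum_of_subset_of_nonneg (f := fun t => e t - r) hsub
        (fun t _ _ => sub_nonneg.2 (hge t))
      rw [Finset.sum_insert (by simp; omega)] at h5
      push_cast
      linarith
  have hc : 0 < ε / (2 * D) := by positivity
  obtain ⟨M, hM⟩ := eventually_atTop.1 (hΔ.eventually (gt_mem_nhds hc))
  set k := N + M + 1 with hk
  have hkD : k ≤ k * D := Nat.le_mul_of_pos_right _ hD
  have h1 := hM (N + k * D) (by omega)
  have hpos : (0 : ℝ) < ((N + k * D : ℕ) : ℝ) := by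
    exact_mod_cast (by omega : 0 < N + k * D)
  rw [div_lt_div_iff₀ hpos (by positivity)] at h1
  have h2 := (hblock k).trans (hsum _)
  push_cast at h1
  have hNk : (N : ℝ) < k := by exact_mod_cast (by omega : N < k)
  have h3 : (k : ℝ) * ε * (2 * D) < ε * (N + k * D) :=
    lt_of_le_of_lt (mul_le_mul_of_nonneg_right h2 (by positivity)) h1
  have h4 : (k : ℝ) * (2 * D) < N + k * D := by
    refine lt_of_mul_lt_mul_left ?_ hε.le
    linarith
  nlinarith

/-- Online mean-square regression with i.i.d. inputs and a sublinear-external-regret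
learner: the expected prediction losses converge with increasing permanence to the
representational error `r_f`. -/
theorem expected_losses_convIP_to_representational_error
    {Ω 𝒳 Θ : Type*} [MeasurableSpace Ω] [MeasurableSpace 𝒳] [MeasurableSpace Θ]
    [Nonempty Θ]
    (P : Measure Ω) [IsProbabilityMeasure P] (p : Measure 𝒳)
    (x : ℕ → Ω → 𝒳) (hxmeas : ∀ t, Measurable (x t))
    (hiid : iIndepFun x P)
    (hdist : ∀ t, Measure.map (x t) P = p)
    (ℓ : 𝒳 × Θ → ℝ) (hmeas : Measurable ℓ) (hnn : ∀ z, 0 ≤ ℓ z)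
    (B : ℝ) (hB : ∀ z, ℓ z ≤ B)
    (θ : ℕ → Ω → Θ) (hθmeas : ∀ t, Measurable (θ t))
    (hindep : ∀ t, IndepFun (θ t) (x t) P)
    (rf : ℝ) (hrf : rf = ⨅ θ' : Θ, ∫ a, ℓ (a, θ') ∂p)
    (Δ : ℕ → ℝ) (hΔ : Tendsto (fun T : ℕ => Δ T / T) atTop (nhds 0))
    (hregret : ∀ᵐ ω ∂P, ∀ T : ℕ,
      ∑ t ∈ Finset.Icc 1 T, ℓ (x t ω, θ t ω) ≤
        (⨅ θ' : Θ, ∑ t ∈ Finset.Icc 1 T, ℓ (x t ω, θ')) + Δ T)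
    (hslln : ∀ᵐ ω ∂P,
      Tendsto (fun T : ℕ => ⨅ θ' : Θ, (1 / (T : ℝ)) * ∑ t ∈ Finset.Icc 1 T, ℓ (x t ω, θ'))
        atTop (nhds rf)) :
    ConvIP (fun t => ∫ ω, ℓ (x t ω, θ t ω) ∂P) rf := by
  have : IsProbabilityMeasure p := by
    rw [← hdist 0]
    exact Measure.isProbabilityMeasure_map (hxmeas 0).aemeasurable
  have hbd : ∀ z, ‖ℓ z‖ ≤ B := fun z => by
    rw [Real.norm_eq_abs, abs_of_nonneg (hnn z)]; exact hB z
  have hint : ∀ (f : Ω → 𝒳 × Θ), Measurable f → Integrable (fun ω => ℓ (f ω)) P := fun f hf =>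
    Integrable.of_bound (hmeas.comp hf).aestronglyMeasurable B (ae_of_all _ fun ω => hbd _)
  have hbdd : BddBelow (Set.range fun θ' : Θ => ∫ a, ℓ (a, θ') ∂p) :=
    ⟨0, by rintro _ ⟨θ', rfl⟩; exact integral_nonneg fun a => hnn _⟩
  refine convIP_of_sum_le _ rf Δ ?_ ?_ hΔ
  · intro t
    have hmap := (indepFun_iff_map_prod_eq_prod_map_map (hθmeas t).aemeasurable
      (hxmeas t).aemeasurable).1 (hindep t)
    have : IsProbabilityMeasure (Measure.map (θ t) P) :=
      Measure.isProbabilityMeasure_map (hθmeas t).aemeasurable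
    have hsw : Measurable fun z : Θ × 𝒳 => ℓ (z.2, z.1) := hmeas.comp measurable_swap
    have hi : Integrable (fun z : Θ × 𝒳 => ℓ (z.2, z.1)) ((Measure.map (θ t) P).prod p) :=
      Integrable.of_bound hsw.aestronglyMeasurable B (ae_of_all _ fun ω => hbd _)
    have h1 : ∫ ω, ℓ (x t ω, θ t ω) ∂P = ∫ θ', ∫ a, ℓ (a, θ') ∂p ∂(Measure.map (θ t) P) := by
      rw [← integral_prod (fun z : Θ × 𝒳 => ℓ (z.2, z.1)) hi, ← hdist t, ← hmap,
        integral_map ((hθmeas t).prodMk (hxmeas t)).aemeasurable hsw.aestronglyMeasurable]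
    simp only [h1]
    calc rf = ∫ _, rf ∂(Measure.map (θ t) P) := by simp
      _ ≤ _ := integral_mono (integrable_const _) hi.integral_prod_left
        (fun θ' => by rw [hrf]; exact ciInf_le hbdd θ')
  · intro T
    have key : ∀ θ' : Θ, ∑ t ∈ Finset.Icc 1 T, ∫ ω, ℓ (x t ω, θ t ω) ∂P
        ≤ T * ∫ a, ℓ (a, θ') ∂p + Δ T := by
      intro θ'
      have hm : ∀ t, ∫ ω, ℓ (x t ω, θ') ∂P = ∫ a, ℓ (a, θ') ∂p := fun t => by
        have hf : Measurable fun a : 𝒳 => ℓ (a, θ') := hmeas.comp measurable_prodMk_right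
        rw [← hdist t, integral_map (hxmeas t).aemeasurable hf.aestronglyMeasurable]
      have hi1 : ∀ t, Integrable (fun ω => ℓ (x t ω, θ t ω)) P := fun t =>
        hint _ ((hxmeas t).prodMk (hθmeas t))
      have hi2 : ∀ t, Integrable (fun ω => ℓ (x t ω, θ')) P := fun t =>
        hint _ ((hxmeas t).prodMk measurable_const)
      have hs2 : Integrable (fun ω => ∑ t ∈ Finset.Icc 1 T, ℓ (x t ω, θ')) P :=
        integrable_finsetSum _ fun t _ => hi2 t
      have h := integral_mono_ae (integrable_finsetSum (Finset.Icc 1 T) fun t _ => hi1 t)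
        (hs2.add (integrable_const (Δ T))) (by
          filter_upwards [hregret] with ω hω
          refine (hω T).trans (add_le_add_left (ciInf_le ⟨0, ?_⟩ θ') _)
          rintro _ ⟨θ'', rfl⟩
          exact Finset.sum_nonneg fun t _ => hnn _)
      rw [integral_finsetSum _ fun t _ => hi1 t, integral_add' hs2 (integrable_const _),
        integral_finsetSum _ fun t _ => hi2 t] at h
      simpa [hm] using h
    rw [Finset.sum_sub_distrib]
    simp only [Finset.sum_const, Nat.card_Icc, Nat.add_sub_cancel, nsmul_eq_mul]
    have h2 : ∑ t ∈ Finset.Icc 1 T, ∫ ω, ℓ (x t ω, θ t ω) ∂P - Δ T ≤ T * rf := by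
      rw [hrf, Real.mul_iInf_of_nonneg (Nat.cast_nonneg T)]
      exact le_ciInf fun θ' => by linarith [key θ']
    linarith
end
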